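/- arXiv:2312.00650 — 3 statements merged into one kernel-verified Lean document; each statement's English description precedes it below -/
import Mathlib

section
/- Let α : R → D be an option preserving map from a rulegraph R to a digraph D. Then the subdigraph of D induced by the image α(V(R)) is a rulegraph, i.e., it contains no infinite directed walk. Moreover, if R is a gamegraph with starting position s, then the induced subdigraph on α(V(R)) is a gamegraph with starting position α(s). -/
/-- The set of options (out-neighbors) of a vertex `p` in the digraph with arrow
relation `E`. -/
def OptSet {V : Type*} (E : V → V → Prop) (p : V) : Set V := {q | E p q}

/-- A digraph has no infinite directed walk (i.e. it is a rulegraph). -/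
def NoInfiniteWalk {V : Type*} (E : V → V → Prop) : Prop :=
  ¬ ∃ f : ℕ → V, ∀ n, E (f n) (f (n + 1))

/-- A map `α` between digraphs is option preserving if `Opt (α p) = α '' Opt p`
for every vertex `p`. -/
def OptionPreserving {V W : Type*} (E : V → V → Prop) (F : W → W → Prop)
    (α : V → W) : Prop :=
  ∀ p, OptSet F (α p) = α '' OptSet E p

/-- A source is a vertex with no in-neighbors. -/
def IsSource {V : Type*} (E : V → V → Prop) (s : V) : Prop := ∀ q, ¬ E q s

/-- A gamegraph is a rulegraph with a unique source `s` (the starting position)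
such that every vertex is a subposition of `s`. -/
def IsGamegraph {V : Type*} (E : V → V → Prop) (s : V) : Prop :=
  NoInfiniteWalk E ∧ IsSource E s ∧ (∀ t, IsSource E t → t = s) ∧
    ∀ p, Relation.ReflTransGen E s p

/-- The equivalence class of `p` under the relation `r`. -/
def cls {V : Type*} (r : V → V → Prop) (p : V) : Set V := {x | r p x}

/-- A congruence relation on a rulegraph: an equivalence relation such that
related vertices have the same set of classes of options. -/
def IsCongruence {V : Type*} (E : V → V → Prop) (r : V → V → Prop) : Prop :=
  Equivalence r ∧ ∀ p q, r p q → cls r '' OptSet E p = cls r '' OptSet E q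

/-- A rulegraph is simple if its only congruence relation is equality. -/
def IsSimple {V : Type*} (E : V → V → Prop) : Prop :=
  ∀ r : V → V → Prop, IsCongruence E r → ∀ p q, r p q → p = q

/-- The arrow relation of the quotient digraph by a setoid `s`: there is an arrow
from `[p]` to `[q]` exactly when there are `p' ∼ p` and `q' ∼ q` with `q' ∈ Opt p'`. -/
def QuotE {V : Type*} (E : V → V → Prop) (s : Setoid V) :
    Quotient s → Quotient s → Prop :=
  fun a b => ∃ p q : V, Quotient.mk s p = a ∧ Quotient.mk s q = b ∧ E p q

theorem OptionPreserving.map_arrow {V W : Type*} {E : V → V → Prop} {F : W → W → Prop}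
    {α : V → W} (hα : OptionPreserving E F α) {p q : V} (h : E p q) : F (α p) (α q) := by
  have hq : α q ∈ OptSet F (α p) := hα p ▸ Set.mem_image_of_mem α h
  exact hq

theorem OptionPreserving.exists_lift {V W : Type*} {E : V → V → Prop} {F : W → W → Prop}
    {α : V → W} (hα : OptionPreserving E F α) {p : V} {w : W} (h : F (α p) w) :
    ∃ q, E p q ∧ α q = w := by
  have hw : w ∈ α '' OptSet E p := hα p ▸ h
  exact hw

theorem noInfiniteWalk_iff_wellFounded {V : Type*} {E : V → V → Prop} :
    NoInfiniteWalk E ↔ WellFounded (flip E) := by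
  rw [wellFounded_iff_isEmpty_descending_chain, isEmpty_subtype, NoInfiniteWalk, not_exists]
  rfl

theorem NoInfiniteWalk.not_transGen_self {V : Type*} {E : V → V → Prop}
    (h : NoInfiniteWalk E) (p : V) : ¬ Relation.TransGen E p p := fun hp =>
  (noInfiniteWalk_iff_wellFounded.1 h).transGen.irrefl.irrefl p
    (Relation.transGen_swap.2 hp)

theorem OptionPreserving.noInfiniteWalk_range {V W : Type*} {E : V → V → Prop}
    {F : W → W → Prop} {α : V → W} (hα : OptionPreserving E F α) (hE : NoInfiniteWalk E) :
    NoInfiniteWalk (fun a b : ↥(Set.range α) => F a.1 b.1) := by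
  rw [noInfiniteWalk_iff_wellFounded] at hE ⊢
  refine ⟨?_⟩
  rintro ⟨_, p, rfl⟩
  induction p using hE.induction with
  | _ p ih =>
    refine ⟨_, ?_⟩
    rintro ⟨w, hw⟩ h
    obtain ⟨q, hq, rfl⟩ := hα.exists_lift h
    exact ih q hq

/-- The image of a rulegraph under an option preserving map induces a rulegraph;
moreover the image of a gamegraph is a gamegraph with starting position the image
of the starting position. -/
theorem stmt_4 {V W : Type*} (E : V → V → Prop) (F : W → W → Prop) (α : V → W)
    (hR : NoInfiniteWalk E) (hα : OptionPreserving E F α) :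
    NoInfiniteWalk (fun a b : ↥(Set.range α) => F a.1 b.1) ∧
      ∀ s : V, IsGamegraph E s →
        IsGamegraph (fun a b : ↥(Set.range α) => F a.1 b.1)
          ⟨α s, Set.mem_range_self s⟩ := by
  have hF := hα.noInfiniteWalk_range hR
  refine ⟨hF, fun s ⟨_, _, _, hs⟩ => ?_⟩
  have hreach : ∀ a : ↥(Set.range α), Relation.ReflTransGen
      (fun a b : ↥(Set.range α) => F a.1 b.1) ⟨α s, Set.mem_range_self s⟩ a := by
    rintro ⟨_, p, rfl⟩
    exact (hs p).lift (fun q => (⟨α q, Set.mem_range_self q⟩ : ↥(Set.range α)))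
      fun _ _ h => hα.map_arrow h
  refine ⟨hF, fun a ha => ?_, fun t ht => ?_, hreach⟩
  · exact hF.not_transGen_self _ (Relation.TransGen.tail' (hreach a) ha)
  · rcases (hreach t).cases_tail with h | ⟨b, _, hb⟩
    · exact h
    · exact absurd hb (ht b)
end

section
/- A rulegraph R is simple if and only if the map p ↦ Opt(p) from vertices to sets of vertices is injective, i.e., no two distinct vertices have the same set of options. -/
/-- A digraph without infinite directed walks has a well-founded reversed arrow relation. -/
theorem NoInfiniteWalk.wellFounded {V : Type*} {E : V → V → Prop} (hR : NoInfiniteWalk E) :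
    WellFounded (fun q p => E p q) := by
  rw [wellFounded_iff_isEmpty_descending_chain]
  exact ⟨fun f => hR ⟨f.1, f.2⟩⟩

/-- Having the same options is a congruence relation. -/
theorem isCongruence_optSet_eq {V : Type*} (E : V → V → Prop) :
    IsCongruence E (fun p q => OptSet E p = OptSet E q) :=
  ⟨⟨fun _ => rfl, Eq.symm, Eq.trans⟩, fun _ _ h => by rw [h]⟩

/-- Every option of a vertex is congruent to some option of any congruent vertex. -/
theorem IsCongruence.exists_option {V : Type*} {E r : V → V → Prop} (hr : IsCongruence E r)
    {p q x : V} (hpq : r p q) (hx : E p x) : ∃ y, E q y ∧ r x y := by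
  have hmem : cls r x ∈ cls r '' OptSet E q := hr.2 p q hpq ▸ Set.mem_image_of_mem _ hx
  obtain ⟨y, hy, hyx⟩ := hmem
  have hyy : y ∈ cls r y := hr.1.refl y
  rw [hyx] at hyy
  exact ⟨y, hy, hyy⟩

/-- A rulegraph is simple iff no two distinct vertices have the same set of
options. -/
theorem stmt_15 {V : Type*} (E : V → V → Prop) (hR : NoInfiniteWalk E) :
    IsSimple E ↔ Function.Injective (OptSet E) := by
  refine ⟨fun h p q hpq => h _ (isCongruence_optSet_eq E) p q hpq, fun hinj r hr p => ?_⟩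
  induction p using hR.wellFounded.induction with
  | _ p ih =>
    intro q hpq
    refine hinj (Set.Subset.antisymm (fun x hx => ?_) fun y hy => ?_)
    · obtain ⟨y, hy, hxy⟩ := hr.exists_option hpq hx
      exact ih x hx y hxy ▸ hy
    · obtain ⟨x, hx, hyx⟩ := hr.exists_option (hr.1.symm hpq) hy
      exact ih x hx y (hr.1.symm hyx) ▸ hx
end

section
/- For every rulegraph R there exists a unique congruence relation ⋈ on the vertices of R such that the quotient rulegraph R/⋈ is simple. -/
/-- A congruence is an equivalence relation that is a simulation. -/
theorem isCongruence_iff {V : Type*} {E r : V → V → Prop} :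
    IsCongruence E r ↔
      Equivalence r ∧ ∀ p q, r p q → ∀ x, E p x → ∃ y, E q y ∧ r x y := by
  refine and_congr_right fun hr => ⟨fun h p q hpq x hx => ?_, fun h p q hpq => ?_⟩
  · have hmem : cls r x ∈ cls r '' OptSet E q := h p q hpq ▸ ⟨x, hx, rfl⟩
    obtain ⟨y, hy, hyx⟩ := hmem
    have hxy : y ∈ cls r x := hyx ▸ hr.refl y
    exact ⟨y, hy, hxy⟩
  · have hsub : ∀ p q, r p q → cls r '' OptSet E p ⊆ cls r '' OptSet E q := by
      rintro p q hpq _ ⟨x, hx, rfl⟩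
      obtain ⟨y, hy, hxy⟩ := h p q hpq x hx
      refine ⟨y, hy, Set.ext fun z => ⟨hr.trans hxy, hr.trans (hr.symm hxy)⟩⟩
    exact (hsub p q hpq).antisymm (hsub q p (hr.symm hpq))

/-- The equivalence relation generated by all congruence relations. -/
def maxCongruence {V : Type*} (E : V → V → Prop) : Setoid V :=
  Relation.EqvGen.setoid fun p q => ∃ r, IsCongruence E r ∧ r p q

theorem IsCongruence.le_maxCongruence {V : Type*} {E : V → V → Prop} {s : Setoid V}
    (hs : IsCongruence E s.r) : s ≤ maxCongruence E :=
  fun _ _ hpq => Relation.EqvGen.rel _ _ ⟨s.r, hs, hpq⟩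

theorem isCongruence_maxCongruence {V : Type*} (E : V → V → Prop) :
    IsCongruence E (maxCongruence E).r := by
  refine isCongruence_iff.2 ⟨(maxCongruence E).iseqv, fun p q hpq => ?_⟩
  suffices h : (∀ x, E p x → ∃ y, E q y ∧ (maxCongruence E).r x y) ∧
      (∀ x, E q x → ∃ y, E p y ∧ (maxCongruence E).r x y) from h.1
  induction hpq with
  | rel p q h =>
    obtain ⟨r, hr, hpq⟩ := h
    have hsim : ∀ p q, r p q → ∀ x, E p x → ∃ y, E q y ∧ (maxCongruence E).r x y := by
      intro p q hpq x hx
      obtain ⟨y, hy, hxy⟩ := (isCongruence_iff.1 hr).2 p q hpq x hx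
      exact ⟨y, hy, Relation.EqvGen.rel _ _ ⟨r, hr, hxy⟩⟩
    exact ⟨hsim p q hpq, hsim q p (hr.1.symm hpq)⟩
  | refl p =>
    exact ⟨fun x hx => ⟨x, hx, (maxCongruence E).refl x⟩,
      fun x hx => ⟨x, hx, (maxCongruence E).refl x⟩⟩
  | symm p q _ ih => exact ih.symm
  | trans p q t _ _ ihpq ihqt =>
    constructor
    · intro x hx
      obtain ⟨y, hy, hxy⟩ := ihpq.1 x hx
      obtain ⟨z, hz, hyz⟩ := ihqt.1 y hy
      exact ⟨z, hz, (maxCongruence E).trans hxy hyz⟩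
    · intro x hx
      obtain ⟨y, hy, hxy⟩ := ihqt.2 x hx
      obtain ⟨z, hz, hyz⟩ := ihpq.2 y hy
      exact ⟨z, hz, (maxCongruence E).trans hxy hyz⟩

/-- Congruences of a quotient pull back to congruences. -/
theorem IsCongruence.comap_mk {V : Type*} {E : V → V → Prop} {s : Setoid V}
    (hs : IsCongruence E s.r) {t : Setoid (Quotient s)} (ht : IsCongruence (QuotE E s) t.r) :
    IsCongruence E (t.comap (Quotient.mk s)).r := by
  refine isCongruence_iff.2 ⟨(t.comap (Quotient.mk s)).iseqv, fun p q hpq x hx => ?_⟩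
  obtain ⟨_, ⟨q', y', hq', rfl, hy'⟩, hxy'⟩ :=
    (isCongruence_iff.1 ht).2 _ _ hpq (Quotient.mk s x) ⟨p, x, rfl, rfl, hx⟩
  obtain ⟨y, hy, hy'y⟩ := (isCongruence_iff.1 hs).2 q' q (Quotient.exact hq') y' hy'
  have hmk : Quotient.mk s y' = Quotient.mk s y := Quotient.sound hy'y
  rw [hmk] at hxy'
  exact ⟨y, hy, hxy'⟩

/-- A congruence `u` coarser than `s` descends to a congruence of the quotient by `s`. -/
theorem IsCongruence.ker_map {V : Type*} {E : V → V → Prop} {s u : Setoid V}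
    (hu : IsCongruence E u.r) (hsu : s ≤ u) :
    IsCongruence (QuotE E s) (Setoid.ker (Quotient.map (sb := u) id hsu)).r := by
  refine isCongruence_iff.2 ⟨(Setoid.ker _).iseqv, ?_⟩
  rintro _ b hab _ ⟨p, x, rfl, rfl, hx⟩
  induction b using Quotient.inductionOn with | _ q =>
  obtain ⟨y, hy, hxy⟩ := (isCongruence_iff.1 hu).2 p q (Quotient.exact hab) x hx
  exact ⟨Quotient.mk s y, ⟨q, y, rfl, rfl, hy⟩, Quotient.sound hxy⟩

/-- Every rulegraph has a unique congruence relation whose quotient is simple. -/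
theorem stmt_17 {V : Type*} (E : V → V → Prop) (hR : NoInfiniteWalk E) :
    ∃! s : Setoid V, IsCongruence E s.r ∧ IsSimple (QuotE E s) := by
  have hmax := isCongruence_maxCongruence E
  refine ⟨maxCongruence E, ⟨hmax, fun r hr a b hab => ?_⟩, fun s ⟨hs, hsimple⟩ => ?_⟩
  · induction a, b using Quotient.inductionOn₂ with | _ p q =>
    exact Quotient.sound ((hmax.comap_mk (t := ⟨r, hr.1⟩) hr).le_maxCongruence hab)
  · refine le_antisymm hs.le_maxCongruence fun p q hpq => ?_
    exact Quotient.exact (hsimple _ (hmax.ker_map hs.le_maxCongruence)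
      (Quotient.mk s p) (Quotient.mk s q) (Quotient.sound hpq))
end
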